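/- For composable combinatorial graph maps f : Γ → Λ and g : Λ → Ξ between connected graphs and every vertex u of Ξ, one has b₁((g ∘ f)⁻¹(u)) = b₁(g⁻¹(u)) + Σ_{w ∈ V_Λ, g_v(w) = u} b₁(f⁻¹(w)). Consequently the assignment gr(Γ) = Map(V_Γ, ℕ), with gr(f)(α)(w) = b₁(f⁻¹(w)) + Σ_{v ∈ f_v⁻¹(w)} α(v) for each vertex w of Λ, is a functor from the category of connected graphs and combinatorial graph maps to Set (the grading modular operad). -/

import Mathlib

/-- A graph: finite sets `V` of vertices and `A` of arcs (half-edges), a fixed-point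
free involution `† = dag` on arcs, and an endpoint map `t : A → V ⊔ {∞}`
(we encode `V ⊔ {∞}` as `Option V` with `∞ = none`). -/
structure CGraph : Type 1 where
  V : Type
  A : Type
  [fintypeV : Fintype V]
  [fintypeA : Fintype A]
  dag : A → A
  dag_dag : ∀ a, dag (dag a) = a
  dag_ne : ∀ a, dag a ≠ a
  t : A → Option V

attribute [instance] CGraph.fintypeV CGraph.fintypeA

namespace CGraph

/-- The generating relation on `V ⊔ A`: an arc touches its `†`-partner, and an arc
touches its endpoint (when the endpoint is a vertex). -/
inductive Touch (G : CGraph) : (G.V ⊕ G.A) → (G.V ⊕ G.A) → Prop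
  | dag (a : G.A) : Touch G (Sum.inr a) (Sum.inr (G.dag a))
  | incid (a : G.A) (v : G.V) : G.t a = some v → Touch G (Sum.inr a) (Sum.inl v)

/-- A graph is connected if `V ⊔ A` is nonempty and the equivalence relation generated
by `Touch` has exactly one equivalence class. -/
def Connected (G : CGraph) : Prop :=
  Nonempty (G.V ⊕ G.A) ∧ ∀ x y : G.V ⊕ G.A, Relation.EqvGen G.Touch x y

/-- The valence of a vertex: the number of arcs ending at it. -/
noncomputable def valence (G : CGraph) (v : G.V) : ℕ :=
  Nat.card {a : G.A // G.t a = some v}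

/-- A vertex is bivalent if exactly two arcs end at it. -/
def Bivalent (G : CGraph) (v : G.V) : Prop := G.valence v = 2

/-- `x ∈ V ⊔ {∞}` is bivalent or `∞`. -/
def BivAt (G : CGraph) (x : Option G.V) : Prop :=
  x = none ∨ ∃ v, x = some v ∧ G.Bivalent v

/-- `IsPath G l s e`: the list of arcs `l = [a₁, …, aₙ]` is a path from `s` to `e`:
`t(a₁†) = s`, `t(aᵢ) = t(aᵢ₊₁†)` for `i < n`, and `t(aₙ) = e`; the empty path is a
path from `s` to `e` exactly when `s = e`. -/
def IsPath (G : CGraph) : List G.A → Option G.V → Option G.V → Prop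
  | [], s, e => s = e
  | a :: l, s, e => G.t (G.dag a) = s ∧ G.IsPath l (G.t a) e

/-- A path is bivalent if each of its intermediate vertices `t(aᵢ)`, `i < n`, is
bivalent or `∞`. -/
def IsBivalentPath (G : CGraph) (l : List G.A) (s e : Option G.V) : Prop :=
  G.IsPath l s e ∧
    ∀ (i : ℕ) (h : i + 1 < l.length), G.BivAt (G.t (l.get ⟨i, Nat.lt_of_succ_lt h⟩))

/-- The underlying data of a combinatorial graph map `Γ → Λ`: a basepoint-preserving
map on vertices-with-∞ and a map on arcs in the opposite direction. -/
structure PreMap (G H : CGraph) : Type where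
  fv : Option G.V → Option H.V
  fa : H.A → G.A

/-- `FiberList f a l`: the list `l` enumerates `f_a⁻¹(a)` (without repetitions) and is
a bivalent path in the target graph between the images of the endpoints of `a`
(oriented so that the identity map is a graph map). -/
def FiberList {G H : CGraph} (f : PreMap G H) (a : G.A) (l : List H.A) : Prop :=
  (∀ b : H.A, b ∈ l ↔ f.fa b = a) ∧ l.Nodup ∧
    H.IsBivalentPath l (f.fv (G.t (G.dag a))) (f.fv (G.t a))

/-- `MidVertexOf H l w`: `w` occurs as an intermediate vertex of the path `l`. -/
def MidVertexOf (H : CGraph) (l : List H.A) (w : H.V) : Prop :=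
  ∃ (i : ℕ) (h : i + 1 < l.length), H.t (l.get ⟨i, Nat.lt_of_succ_lt h⟩) = some w

/-- `OnFiberPath f w a`: the vertex `w` of the target occurs as an intermediate vertex
of the bivalent path enumerating `f_a⁻¹(a)`. -/
def OnFiberPath {G H : CGraph} (f : PreMap G H) (w : H.V) (a : G.A) : Prop :=
  ∃ l : List H.A, FiberList f a l ∧ MidVertexOf H l w

/-- The conditions for a pair `(f_v, f_a)` to be a combinatorial graph map:
(1) `f_v(∞) = ∞`; (2) `f_a` commutes with `†`; (3) each `f_a⁻¹(a)` admits an ordering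
making it a bivalent path between the images of the endpoints of `a`; (4) vertices
identified by `f_v` are joined by a path of arcs outside the image of `f_a`;
(5) each vertex of the target not in the image of `f_v` is bivalent and occurs as an
intermediate vertex of exactly one of the bivalent paths from (3) (where the paths of
an arc and of its `†`-partner are regarded as the same path). -/
def IsGraphMap {G H : CGraph} (f : PreMap G H) : Prop :=
  f.fv none = none ∧
  (∀ b : H.A, f.fa (H.dag b) = G.dag (f.fa b)) ∧
  (∀ a : G.A, ∃ l : List H.A, FiberList f a l) ∧
  (∀ v v' : G.V, f.fv (some v) = f.fv (some v') → f.fv (some v) ≠ none →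
    ∃ l : List G.A, (∀ c ∈ l, c ∉ Set.range f.fa) ∧ G.IsPath l (some v) (some v')) ∧
  (∀ w : H.V, (∀ v : G.V, f.fv (some v) ≠ some w) →
    H.Bivalent w ∧ ∃ a : G.A, OnFiberPath f w a ∧
      ∀ a' : G.A, OnFiberPath f w a' → a' = a ∨ a' = G.dag a)

/-- The identity pre-map. -/
def PreMap.id (G : CGraph) : PreMap G G := ⟨fun x => x, fun a => a⟩

/-- Composition of pre-maps: `f` first, then `g`. -/
def PreMap.comp {G H K : CGraph} (f : PreMap G H) (g : PreMap H K) : PreMap G K :=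
  ⟨g.fv ∘ f.fv, f.fa ∘ g.fa⟩

/-- A combinatorial graph map is inert if `f_v⁻¹(w)` has exactly one element for every
vertex `w` of the target, and `f_a⁻¹(a)` is empty only when `f_v(t(a)) = ∞`. -/
def IsInert {G H : CGraph} (f : PreMap G H) : Prop :=
  (∀ w : H.V, ∃! v : G.V, f.fv (some v) = some w) ∧
  (∀ a : G.A, (∀ b : H.A, f.fa b ≠ a) → f.fv (G.t a) = none)

/-- A combinatorial graph map is active if `f_v⁻¹(∞) = {∞}` and none of the bivalent
paths `f_a⁻¹(a)` passes through `∞`. -/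
def IsActive {G H : CGraph} (f : PreMap G H) : Prop :=
  (∀ x : Option G.V, f.fv x = none → x = none) ∧
  (∀ (a : G.A) (l : List H.A), FiberList f a l →
    ∀ (i : ℕ) (h : i + 1 < l.length), H.t (l.get ⟨i, Nat.lt_of_succ_lt h⟩) ≠ none)

/-- An isomorphism of graphs: a graph map with a two-sided inverse graph map. -/
def IsGraphIso {G H : CGraph} (f : PreMap G H) : Prop :=
  IsGraphMap f ∧ ∃ g : PreMap H G, IsGraphMap g ∧
    f.comp g = PreMap.id G ∧ g.comp f = PreMap.id H

end CGraph

namespace CGraph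

/-- The condition for an arc of `Γ` to belong to the fiber of a pre-map `f : Γ → Λ`
over a vertex `w` of `Λ`: the arc (and its `†`-partner) is not in the image of `f_a`,
and both of its endpoints are vertices lying in `f_v⁻¹(w)`. -/
def FiberArc {G H : CGraph} (f : PreMap G H) (w : H.V) (a : G.A) : Prop :=
  a ∉ Set.range f.fa ∧ G.dag a ∉ Set.range f.fa ∧
    (∃ v, G.t a = some v ∧ f.fv (some v) = some w) ∧
    (∃ v, G.t (G.dag a) = some v ∧ f.fv (some v) = some w)

/-- The fiber `f⁻¹(w)` of a pre-map `f : Γ → Λ` over a vertex `w` of `Λ`: the subgraph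
of `Γ` with vertex set `f_v⁻¹(w)` and arc set the arcs outside the image of `f_a` with
both endpoints in `f_v⁻¹(w)`. -/
noncomputable def fiber {G H : CGraph} (f : PreMap G H) (w : H.V) : CGraph where
  V := {v : G.V // f.fv (some v) = some w}
  A := {a : G.A // FiberArc f w a}
  fintypeV := Fintype.ofFinite _
  fintypeA := Fintype.ofFinite _
  dag a := ⟨G.dag a.1, a.2.2.1, by rw [G.dag_dag]; exact a.2.1, a.2.2.2.2, by
    rw [G.dag_dag]; exact a.2.2.2.1⟩
  dag_dag a := Subtype.ext (G.dag_dag a.1)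
  dag_ne a h := G.dag_ne a.1 (congrArg Subtype.val h)
  t a := some ⟨a.2.2.2.1.choose, a.2.2.2.1.choose_spec.2⟩

end CGraph

namespace CGraph

/-- The first Betti number of a finite graph:
`#edges − #vertices + #components` (one summand per connected component; `0` for the
empty graph).  Edges are pairs `{a, a†}` of arcs, and connected components are the
equivalence classes of `V ⊔ A` under the equivalence relation generated by `Touch`. -/
noncomputable def b1 (G : CGraph) : ℕ :=
  Fintype.card G.A / 2 + Nat.card (Quot G.Touch) - Fintype.card G.V

end CGraph

namespace CGraph

open Classical in
/-- The value of the grading modular operad on a graph map: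
`gr(f)(α)(w) = b₁(f⁻¹(w)) + Σ_{v ∈ f_v⁻¹(w)} α(v)`. -/
noncomputable def grMap {G H : CGraph} (f : PreMap G H) (α : G.V → ℕ) : H.V → ℕ :=
  fun w => b1 (fiber f w) + ∑ v : {v : G.V // f.fv (some v) = some w}, α v.1

end CGraph

/-!
STATEMENT 15: For composable combinatorial graph maps `f : Γ → Λ` and `g : Λ → Ξ`
between connected graphs and every vertex `u` of `Ξ`, one has
`b₁((g∘f)⁻¹(u)) = b₁(g⁻¹(u)) + Σ_{w ∈ V_Λ, g_v(w) = u} b₁(f⁻¹(w))`.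
Consequently the assignment `gr(Γ) = Map(V_Γ, ℕ)`, with
`gr(f)(α)(w) = b₁(f⁻¹(w)) + Σ_{v ∈ f_v⁻¹(w)} α(v)`, is a functor from the category of
connected graphs and combinatorial graph maps to `Set` (the grading modular operad):
it sends identities to identities and composites to composites.
-/


namespace CGraph

open Classical in
/-- The boundary of a chain. -/
noncomputable def bd (G : CGraph) : (G.A → ℚ) →ₗ[ℚ] (G.V → ℚ) where
  toFun φ v := ∑ a, if G.t a = some v then φ a else 0
  map_add' φ ψ := by
    funext v
    simp only [Pi.add_apply, ← Finset.sum_add_distrib]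
    refine Finset.sum_congr rfl fun a _ => ?_
    split_ifs <;> simp
  map_smul' c φ := by
    funext v
    simp [Finset.mul_sum]

open Classical in
theorem bd_apply (G : CGraph) (φ : G.A → ℚ) (v : G.V) :
    G.bd φ v = ∑ a, if G.t a = some v then φ a else 0 := rfl

/-- Antisymmetric cycles supported on `P`. -/
noncomputable def Cyc (G : CGraph) (P : G.A → Prop) : Submodule ℚ (G.A → ℚ) where
  carrier := {φ | (∀ a, φ (G.dag a) = - φ a) ∧ (∀ a, ¬ P a → φ a = 0) ∧ G.bd φ = 0}
  zero_mem' := ⟨by simp, by simp, by simp⟩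
  add_mem' := by
    rintro φ ψ ⟨h1, h2, h3⟩ ⟨k1, k2, k3⟩
    refine ⟨fun a => ?_, fun a ha => ?_, ?_⟩
    · simp [h1, k1]; ring
    · simp [h2 a ha, k2 a ha]
    · rw [map_add, h3, k3, add_zero]
  smul_mem' := by
    rintro c φ ⟨h1, h2, h3⟩
    refine ⟨fun a => ?_, fun a ha => ?_, ?_⟩
    · simp [h1]
    · simp [h2 a ha]
    · rw [map_smul, h3, smul_zero]

theorem mem_Cyc {G : CGraph} {P : G.A → Prop} {φ : G.A → ℚ} :
    φ ∈ G.Cyc P ↔ (∀ a, φ (G.dag a) = - φ a) ∧ (∀ a, ¬ P a → φ a = 0) ∧ G.bd φ = 0 :=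
  Iff.rfl

/-- An orientation. -/
def Ori (D : CGraph) (a : D.A) : Prop :=
  Fintype.equivFin D.A a < Fintype.equivFin D.A (D.dag a)

theorem ori_dag (D : CGraph) (a : D.A) : D.Ori (D.dag a) ↔ ¬ D.Ori a := by
  unfold Ori
  rw [D.dag_dag, not_lt]
  constructor
  · exact le_of_lt
  · intro h
    refine lt_of_le_of_ne h fun h' => D.dag_ne a ?_
    exact (Fintype.equivFin D.A).injective h'

open Classical in
/-- Arcs split into positive and negative ones. -/
noncomputable def arcEquiv (D : CGraph) : {a // D.Ori a} ⊕ {a // D.Ori a} ≃ D.A where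
  toFun := Sum.elim (fun o => o.1) (fun o => D.dag o.1)
  invFun a := if h : D.Ori a then Sum.inl ⟨a, h⟩ else Sum.inr ⟨D.dag a, (D.ori_dag a).2 h⟩
  left_inv x := by
    rcases x with ⟨o, ho⟩ | ⟨o, ho⟩
    · simp [ho]
    · simp [D.ori_dag, ho, D.dag_dag]
  right_inv a := by
    by_cases h : D.Ori a <;> simp [h, D.dag_dag]

open Classical in
theorem b1_eq_finrank (D : CGraph) (ht : ∀ a, ∃ v, D.t a = some v) :
    b1 D = Module.finrank ℚ (D.Cyc (fun _ => True)) := by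
  choose τ hτ using ht
  let O := {a // D.Ori a}
  have hcard : Fintype.card D.A = Fintype.card O + Fintype.card O := by
    rw [← Fintype.card_sum]; exact (Fintype.card_congr D.arcEquiv).symm
  have hsum : ∀ F : D.A → ℚ, ∑ a, F a = ∑ o : O, (F o.1 + F (D.dag o.1)) := by
    intro F
    rw [← Equiv.sum_comp D.arcEquiv, Fintype.sum_sum_type, Finset.sum_add_distrib]
    rfl
  let M : Matrix D.V O ℚ := fun v o =>
    (if τ o.1 = v then 1 else 0) - (if τ (D.dag o.1) = v then 1 else 0)
  have hM : ∀ φ : D.A → ℚ, (∀ a, φ (D.dag a) = - φ a) →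
      D.bd φ = M.mulVec (fun o : O => φ o.1) := by
    intro φ hφ
    funext v
    rw [bd_apply, hsum]
    simp only [Matrix.mulVec, dotProduct, M, hτ, hφ, Option.some.injEq]
    refine Finset.sum_congr rfl fun o _ => ?_
    split_ifs <;> ring
  -- cycles are the kernel of M
  have e1 : Module.finrank ℚ (D.Cyc (fun _ => True)) =
      Module.finrank ℚ (LinearMap.ker M.mulVecLin) := by
    let R : D.Cyc (fun _ => True) →ₗ[ℚ] LinearMap.ker M.mulVecLin :=
      LinearMap.codRestrict _ ((LinearMap.funLeft ℚ ℚ (fun o : O => o.1)).comp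
        (Submodule.subtype _)) (by
          rintro ⟨φ, hφ⟩
          rw [LinearMap.mem_ker, Matrix.mulVecLin_apply]
          exact (hM φ hφ.1).symm.trans hφ.2.2)
    refine LinearEquiv.finrank_eq (LinearEquiv.ofBijective R ⟨?_, ?_⟩)
    · rintro ⟨φ, hφ⟩ ⟨ψ, hψ⟩ h
      have h' : ∀ o : O, φ o.1 = ψ o.1 := fun o => congrFun (congrArg Subtype.val h) o
      apply Subtype.ext
      funext a
      by_cases ha : D.Ori a
      · exact h' ⟨a, ha⟩
      · have := h' ⟨_, (D.ori_dag a).2 ha⟩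
        simp only [hφ.1, hψ.1] at this
        exact neg_injective this
    · rintro ⟨x, hx⟩
      let φ : D.A → ℚ := fun a => if h : D.Ori a then x ⟨a, h⟩
        else - x ⟨D.dag a, (D.ori_dag a).2 h⟩
      have hφ : ∀ a, φ (D.dag a) = - φ a := by
        intro a
        by_cases h : D.Ori a
        · simp [φ, D.ori_dag, h, D.dag_dag]
        · simp [φ, D.ori_dag, h]
      have hφx : (fun o : O => φ o.1) = x := by
        funext o
        simp [φ, o.2]
      refine ⟨⟨φ, hφ, by simp, ?_⟩, ?_⟩
      · rw [hM φ hφ, hφx]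
        exact hx
      · exact Subtype.ext hφx
  have e2 : Module.finrank ℚ (LinearMap.ker M.transpose.mulVecLin) =
      Nat.card (Quot D.Touch) := by
    have : Fintype (Quot D.Touch) := Fintype.ofFinite _
    rw [Nat.card_eq_fintype_card, ← Module.finrank_fintype_fun_eq_card ℚ]
    let R : (Quot D.Touch → ℚ) →ₗ[ℚ] (D.V → ℚ) :=
      LinearMap.funLeft ℚ ℚ (fun v => Quot.mk _ (Sum.inl v))
    have hq : ∀ a, Quot.mk D.Touch (Sum.inr a) = Quot.mk _ (Sum.inl (τ a)) :=
      fun a => Quot.sound (Touch.incid a _ (hτ a))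
    have hq2 : ∀ a, Quot.mk D.Touch (Sum.inl (τ (D.dag a))) = Quot.mk _ (Sum.inl (τ a)) := by
      intro a
      rw [← hq, ← hq]
      exact (Quot.sound (Touch.dag a)).symm
    have hinj : Function.Injective R := by
      intro k k' h
      have h' : ∀ v, k (Quot.mk _ (Sum.inl v)) = k' (Quot.mk _ (Sum.inl v)) :=
        fun v => congrFun h v
      funext q
      induction q using Quot.ind with
      | mk x =>
        rcases x with v | a
        · exact h' v
        · rw [hq]; exact h' _
    have hMT : ∀ (h : D.V → ℚ) (o : O), M.transpose.mulVec h o =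
        h (τ o.1) - h (τ (D.dag o.1)) := by
      intro h o
      simp only [Matrix.mulVec, dotProduct, Matrix.transpose_apply]
      simp [M, sub_mul, Finset.sum_sub_distrib]
    have hr : LinearMap.range R = LinearMap.ker M.transpose.mulVecLin := by
      ext h
      rw [LinearMap.mem_range, LinearMap.mem_ker, Matrix.mulVecLin_apply]
      constructor
      · rintro ⟨k, rfl⟩
        funext o
        rw [hMT]
        simp only [R, LinearMap.funLeft_apply, hq2, sub_self, Pi.zero_apply]
      · intro hh
        have h0 : ∀ o : O, h (τ o.1) = h (τ (D.dag o.1)) := by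
          intro o
          have := congrFun hh o
          rw [hMT] at this
          exact sub_eq_zero.1 this
        have h1 : ∀ a, h (τ a) = h (τ (D.dag a)) := by
          intro a
          by_cases ha : D.Ori a
          · exact h0 ⟨a, ha⟩
          · have := h0 ⟨_, (D.ori_dag a).2 ha⟩
            simp only [D.dag_dag] at this
            exact this.symm
        refine ⟨Quot.lift (Sum.elim h (fun a => h (τ a))) ?_, ?_⟩
        · rintro _ _ (a | ⟨a, v, hv⟩)
          · exact h1 a
          · rw [hτ] at hv
            simp only [Sum.elim_inr, Sum.elim_inl]
            rw [Option.some.inj hv]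
        · funext v
          rfl
    rw [← hr]
    exact LinearMap.finrank_range_of_inj hinj
  have r1 := LinearMap.finrank_range_add_finrank_ker M.mulVecLin
  have r2 := LinearMap.finrank_range_add_finrank_ker M.transpose.mulVecLin
  have r3 := Matrix.rank_transpose M
  unfold Matrix.rank at r3
  rw [Module.finrank_fintype_fun_eq_card] at r1 r2
  unfold b1
  omega

theorem b1_fiber_eq {G H : CGraph} (f : PreMap G H) (w : H.V) :
    b1 (fiber f w) = Module.finrank ℚ (G.Cyc (FiberArc f w)) := by
  classical
  rw [b1_eq_finrank (fiber f w) (fun a => ⟨_, rfl⟩)]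
  have htt : ∀ (a : (fiber f w).A) (v : (fiber f w).V),
      (fiber f w).t a = some v ↔ G.t a.1 = some v.1 := by
    intro a v
    have h := a.2.2.2.1.choose_spec.1
    rw [h]
    constructor
    · intro h2
      exact congrArg some (congrArg Subtype.val (Option.some.inj h2))
    · intro h2
      exact congrArg some (Subtype.ext (Option.some.inj h2))
  have hbd : ∀ (φ : G.A → ℚ), (∀ a, ¬ FiberArc f w a → φ a = 0) → ∀ v : (fiber f w).V,
      (fiber f w).bd (fun a => φ a.1) v = G.bd φ v.1 := by
    intro φ hφ v
    rw [bd_apply, bd_apply]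
    refine Fintype.sum_of_injective (fun a : (fiber f w).A => a.1) Subtype.val_injective _ _ ?_ ?_
    · intro a ha
      rw [hφ a (fun h => ha ⟨⟨a, h⟩, rfl⟩), ite_self]
    · intro a
      simp only [htt]
  let R : G.Cyc (FiberArc f w) →ₗ[ℚ] (fiber f w).Cyc (fun _ => True) :=
    LinearMap.codRestrict _ ((LinearMap.funLeft ℚ ℚ (fun a : (fiber f w).A => a.1)).comp
      (Submodule.subtype _)) (by
        rintro ⟨φ, hφ⟩
        refine ⟨fun a => hφ.1 a.1, by simp, ?_⟩
        funext v
        refine (hbd φ hφ.2.1 v).trans ?_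
        rw [hφ.2.2]; rfl)
  refine (LinearEquiv.finrank_eq (LinearEquiv.ofBijective R ⟨?_, ?_⟩)).symm
  · rintro ⟨φ, hφ⟩ ⟨ψ, hψ⟩ h
    have h' : ∀ o : (fiber f w).A, φ o.1 = ψ o.1 := fun o => congrFun (congrArg Subtype.val h) o
    apply Subtype.ext
    funext a
    by_cases ha : FiberArc f w a
    · exact h' ⟨a, ha⟩
    · exact (hφ.2.1 a ha).trans (hψ.2.1 a ha).symm
  · rintro ⟨x, hx⟩
    let φ : G.A → ℚ := fun a => if h : FiberArc f w a then x ⟨a, h⟩ else 0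
    have hφx : (fun a : (fiber f w).A => φ a.1) = x := by
      funext a
      exact dif_pos a.2
    have hz : ∀ a, ¬ FiberArc f w a → φ a = 0 := fun a ha => dif_neg ha
    have hd : ∀ a, FiberArc f w a → FiberArc f w (G.dag a) :=
      fun a ha => ((fiber f w).dag ⟨a, ha⟩).2
    refine ⟨⟨φ, ?_, hz, ?_⟩, Subtype.ext hφx⟩
    · intro a
      by_cases h : FiberArc f w a
      · have h1 := congrFun hφx ⟨a, h⟩
        have h2 := congrFun hφx ⟨G.dag a, hd a h⟩
        simp only at h1 h2
        rw [h1, h2]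
        exact hx.1 ⟨a, h⟩
      · have h' : ¬ FiberArc f w (G.dag a) := fun h' => h (by
          have := hd _ h'
          rwa [G.dag_dag] at this)
        rw [hz a h, hz _ h', neg_zero]
    · funext v
      by_cases hv : f.fv (some v) = some w
      · rw [← hbd φ hz ⟨v, hv⟩, hφx, hx.2.2]; rfl
      · rw [bd_apply]
        refine Finset.sum_eq_zero fun a _ => ?_
        split_ifs with h
        · refine hz a fun ha => hv ?_
          obtain ⟨v', h1, h2⟩ := ha.2.2.1
          rw [h] at h1
          rw [h1, h2]
        · rfl

end CGraph

namespace CGraph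

theorem isPath_append {H : CGraph} (l1 l2 : List H.A) (s e : Option H.V) :
    H.IsPath (l1 ++ l2) s e ↔ ∃ m, H.IsPath l1 s m ∧ H.IsPath l2 m e := by
  induction l1 generalizing s with
  | nil => simp [IsPath]
  | cons a l ih =>
    simp only [List.cons_append, IsPath, ih]
    constructor
    · rintro ⟨h, m, h1, h2⟩
      exact ⟨m, ⟨h, h1⟩, h2⟩
    · rintro ⟨m, ⟨h, h1⟩, h2⟩
      exact ⟨h, m, h1, h2⟩

theorem biv_consec {H : CGraph} {l1 l2 : List H.A} {b b' : H.A} {s e : Option H.V}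
    (h : H.IsBivalentPath (l1 ++ b :: b' :: l2) s e) :
    H.t b = H.t (H.dag b') ∧ H.BivAt (H.t b) := by
  obtain ⟨h1, h2⟩ := h
  obtain ⟨m, _, h3⟩ := (isPath_append _ _ _ _).1 h1
  refine ⟨h3.2.1.symm, ?_⟩
  have := h2 l1.length (by simp)
  simpa using this

theorem bivalent_arcs {H : CGraph} {w : H.V} (hw : H.Bivalent w) {b c : H.A}
    (hb : H.t b = some w) (hc : H.t c = some w) (hbc : b ≠ c) (d : H.A) :
    H.t d = some w ↔ d = b ∨ d = c := by
  refine ⟨fun hd => ?_, ?_⟩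
  · obtain ⟨x, y, hxy, hu⟩ := Nat.card_eq_two_iff.1 hw
    have key : ∀ z : {a : H.A // H.t a = some w}, z = x ∨ z = y := by
      intro z
      have : z ∈ ({x, y} : Set _) := by rw [hu]; trivial
      simpa using this
    have k1 := key ⟨b, hb⟩
    have k2 := key ⟨c, hc⟩
    have k3 := key ⟨d, hd⟩
    by_contra hcon
    push Not at hcon
    rcases k1 with k1 | k1 <;> rcases k2 with k2 | k2 <;> rcases k3 with k3 | k3 <;>
      simp_all [Subtype.ext_iff]
  · rintro (rfl | rfl) <;> assumption

section
variable {G H : CGraph} {f : PreMap G H}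

theorem fiberList_last {a : G.A} {l : List H.A} {b : H.A} (h : FiberList f a (l ++ [b])) :
    H.t b = f.fv (G.t a) := by
  obtain ⟨m, _, h3⟩ := (isPath_append _ _ _ _).1 h.2.2.1
  exact h3.2

theorem fiberList_first {a : G.A} {l : List H.A} {b : H.A} (h : FiberList f a (b :: l)) :
    H.t (H.dag b) = f.fv (G.t (G.dag a)) := h.2.2.1.1

/-- Arcs outside the image have endpoints with the same image. -/
theorem fv_off_range (hf : IsGraphMap f) {a : G.A} (ha : a ∉ Set.range f.fa) :
    f.fv (G.t (G.dag a)) = f.fv (G.t a) := by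
  obtain ⟨l, hl⟩ := hf.2.2.1 a
  rcases l with _ | ⟨b, l⟩
  · exact hl.2.2.1
  · exact absurd ⟨b, (hl.1 b).1 (by simp)⟩ ha

theorem dag_off_range (hf : IsGraphMap f) {a : G.A} (ha : a ∉ Set.range f.fa) :
    G.dag a ∉ Set.range f.fa := by
  rintro ⟨b, hb⟩
  exact ha ⟨H.dag b, by rw [hf.2.1, hb, G.dag_dag]⟩

/-- Membership in the fiber, simplified. -/
theorem fiberArc_iff (hf : IsGraphMap f) (w : H.V) (a : G.A) :
    FiberArc f w a ↔ a ∉ Set.range f.fa ∧ f.fv (G.t a) = some w := by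
  have key : ∀ x : Option G.V, f.fv x = some w → ∃ v, x = some v ∧ f.fv (some v) = some w := by
    intro x hx
    cases x with
    | none => rw [hf.1] at hx; cases hx
    | some v => exact ⟨v, rfl, hx⟩
  constructor
  · rintro ⟨h1, _, ⟨v, h3, h4⟩, _⟩
    exact ⟨h1, by rw [h3, h4]⟩
  · rintro ⟨h1, h2⟩
    exact ⟨h1, dag_off_range hf h1, key _ h2, key _ (by rw [fv_off_range hf h1, h2])⟩

/-- If `v` lies over `w` and some arc lies in the image, then some arc in the image ends
over `w`. -/
theorem exists_range_arc (hG : G.Connected) (hf : IsGraphMap f) {w : H.V} {v : G.V}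
    (hv : f.fv (some v) = some w) (b : H.A) :
    ∃ c ∈ Set.range f.fa, f.fv (G.t c) = some w := by
  by_contra hcon
  push Not at hcon
  have hoff : ∀ c, f.fv (G.t c) = some w → c ∉ Set.range f.fa := fun c h hc => hcon c hc h
  let S : G.V ⊕ G.A → Prop := Sum.elim (fun v => f.fv (some v) = some w)
    (fun c => f.fv (G.t c) = some w)
  have hS : ∀ x y, G.Touch x y → (S x ↔ S y) := by
    rintro _ _ (a | ⟨a, v, hv⟩)
    · constructor
      · intro h
        exact (fv_off_range hf (hoff _ h)).trans h
      · intro h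
        have := (fv_off_range hf (hoff _ h))
        rw [G.dag_dag] at this
        exact this.trans h
    · change f.fv (G.t a) = some w ↔ f.fv (some v) = some w
      rw [hv]
  have hE : ∀ x y, Relation.EqvGen G.Touch x y → (S x ↔ S y) := by
    intro x y h
    induction h with
    | rel _ _ h => exact hS _ _ h
    | refl => exact Iff.rfl
    | symm _ _ _ ih => exact ih.symm
    | trans _ _ _ _ _ ih1 ih2 => exact ih1.trans ih2
  have h1 := (hE _ _ (hG.2 (Sum.inl v) (Sum.inr (f.fa b)))).1 hv
  exact hcon _ ⟨b, rfl⟩ h1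

/-- Consecutive arcs on a fiber path. -/
theorem consec_ne (hf : IsGraphMap f) {a : G.A} {l1 l2 : List H.A} {b b' : H.A}
    (h : FiberList f a (l1 ++ b :: b' :: l2)) :
    f.fa b = a ∧ f.fa b' = a ∧ f.fa (H.dag b') = G.dag a ∧ b ≠ H.dag b' := by
  have h1 : f.fa b = a := (h.1 b).1 (by simp)
  have h2 : f.fa b' = a := (h.1 b').1 (by simp)
  have h3 : f.fa (H.dag b') = G.dag a := by rw [hf.2.1, h2]
  refine ⟨h1, h2, h3, fun h4 => G.dag_ne a ?_⟩
  rw [← h3, ← h4, h1]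

theorem mid_not_image (hG : G.Connected) (hf : IsGraphMap f) {a : G.A} {l1 l2 : List H.A}
    {b b' : H.A} (h : FiberList f a (l1 ++ b :: b' :: l2)) {w : H.V} (hb : H.t b = some w)
    (v : G.V) : f.fv (some v) ≠ some w := by
  intro hv
  obtain ⟨hba, hba', hbd, hne⟩ := consec_ne hf h
  obtain ⟨hc1, hc2⟩ := biv_consec h.2.2
  have hw : H.Bivalent w := by
    rcases hc2 with h2 | ⟨w', h2, h3⟩
    · rw [hb] at h2; cases h2
    · rw [hb] at h2; cases h2; exact h3
  have harcs := bivalent_arcs hw hb (hc1.symm.trans hb) hne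
  have hnd := h.2.1
  obtain ⟨c, ⟨d, hd⟩, hcw⟩ := exists_range_arc hG hf hv b
  obtain ⟨l, hl⟩ := hf.2.2.1 c
  have hlne : l ≠ [] := by
    rintro rfl
    exact absurd ((hl.1 d).2 hd) (by simp)
  obtain ⟨l', x, rfl⟩ := List.eq_nil_or_concat' l |>.resolve_left hlne
  have hxc : f.fa x = c := (hl.1 x).1 (by simp)
  have hx := fiberList_last hl
  rw [hcw, harcs] at hx
  have hca : c = a ∨ c = G.dag a := by
    rcases hx with rfl | rfl
    · left; rw [← hxc, hba]
    · right; rw [← hxc, hbd]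
  rcases hca with rfl | rfl
  · -- the last arc of the path of `a` ends at `w`
    obtain ⟨l3, y, hy⟩ := (List.eq_nil_or_concat' (b' :: l2)).resolve_left (by simp)
    have hy' : l1 ++ b :: b' :: l2 = (l1 ++ b :: l3) ++ [y] := by
      rw [hy]; simp
    rw [hy'] at h hnd
    have hyw := fiberList_last h
    have hya : f.fa y = c := (h.1 y).1 (by simp)
    rw [hcw, harcs] at hyw
    rcases hyw with rfl | rfl
    · simp [List.nodup_append] at hnd
    · exact G.dag_ne c (by rw [← hbd, hya])
  · -- the first arc of the path of `a` starts at `w`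
    obtain ⟨y, l3, hy⟩ := List.exists_cons_of_ne_nil (l := l1 ++ [b]) (by simp)
    have hy' : l1 ++ b :: b' :: l2 = y :: (l3 ++ b' :: l2) := by
      rw [← List.cons_append, ← hy]; simp
    rw [hy'] at h hnd
    have hyw := fiberList_first h
    have hya : f.fa y = a := (h.1 y).1 (by simp)
    rw [hcw, harcs] at hyw
    rcases hyw with h5 | h5
    · apply G.dag_ne a
      rw [← hya, ← hf.2.1, h5, hba, hya]
    · have : y = b' := by rw [← H.dag_dag y, h5, H.dag_dag]
      subst this
      simp at hnd

/-- An arc ending at an image vertex is the last one of its path. -/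
theorem arc_last (hG : G.Connected) (hf : IsGraphMap f) (b : H.A) {v : G.V}
    (hb : H.t b = f.fv (some v)) (hv : f.fv (some v) ≠ none) {l : List H.A}
    (hl : FiberList f (f.fa b) l) : ∃ l', l = l' ++ [b] := by
  obtain ⟨l1, l2, rfl⟩ := List.append_of_mem ((hl.1 b).2 rfl)
  rcases l2 with _ | ⟨b', l2⟩
  · exact ⟨l1, rfl⟩
  · obtain ⟨w, hw⟩ := Option.ne_none_iff_exists'.1 hv
    exact absurd hw (mid_not_image hG hf hl (hb.trans hw) v)

theorem exists_last (hf : IsGraphMap f) (d : H.A) :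
    ∃ l b, FiberList f (f.fa d) (l ++ [b]) ∧ f.fa b = f.fa d := by
  obtain ⟨l, hl⟩ := hf.2.2.1 (f.fa d)
  have hlne : l ≠ [] := by
    rintro rfl
    exact absurd ((hl.1 d).2 rfl) (by simp)
  obtain ⟨l', x, rfl⟩ := List.eq_nil_or_concat' l |>.resolve_left hlne
  exact ⟨l', x, hl, (hl.1 x).1 (by simp)⟩

open Classical in
/-- Pulling back along `f_a` is a chain map. -/
theorem bd_comp (hG : G.Connected) (hf : IsGraphMap f) (φ : G.A → ℚ)
    (hφ : ∀ a, φ (G.dag a) = - φ a) (w : H.V) :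
    H.bd (fun b => φ (f.fa b)) w = ∑ v, if f.fv (some v) = some w then G.bd φ v else 0 := by
  by_cases him : ∃ v, f.fv (some v) = some w
  · obtain ⟨v0, hv0⟩ := him
    have e1 : (∑ v, if f.fv (some v) = some w then G.bd φ v else 0) =
        ∑ a, if f.fv (G.t a) = some w then φ a else 0 := by
      have : ∀ v, (if f.fv (some v) = some w then G.bd φ v else 0) =
          ∑ a, if f.fv (some v) = some w then (if G.t a = some v then φ a else 0) else 0 := by
        intro v
        rw [bd_apply]
        split_ifs <;> simp
      simp only [this]
      rw [Finset.sum_comm]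
      refine Finset.sum_congr rfl fun a _ => ?_
      cases hta : G.t a with
      | none => simp [hf.1]
      | some v1 =>
        rw [Finset.sum_eq_single v1]
        · simp
        · intro v _ hv
          have : some v1 ≠ some v := fun h => hv (Option.some.inj h).symm
          simp [this]
        · simp
    have e2 : (∑ a, if f.fv (G.t a) = some w then φ a else 0) =
        ∑ a ∈ Finset.univ.filter (fun a => a ∈ Set.range f.fa ∧ f.fv (G.t a) = some w), φ a := by
      rw [← Finset.sum_filter, ← Finset.sum_filter_add_sum_filter_not _ (fun a => a ∈ Set.range f.fa),
        Finset.filter_filter, Finset.filter_filter]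
      have e3 : ∑ a ∈ Finset.univ.filter (fun a => f.fv (G.t a) = some w ∧ a ∉ Set.range f.fa), φ a
          = 0 := by
        refine Finset.sum_involution (fun a _ => G.dag a) ?_ ?_ ?_ ?_
        · intro a _; rw [hφ]; ring
        · intro a _ _; exact G.dag_ne a
        · intro a ha
          simp only [Finset.mem_filter, Finset.mem_univ, true_and] at ha ⊢
          exact ⟨(fv_off_range hf ha.2).trans ha.1, dag_off_range hf ha.2⟩
        · intro a _; exact G.dag_dag a
      rw [e3, add_zero]
      refine Finset.sum_congr ?_ fun _ _ => rfl
      ext a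
      simp [and_comm]
    rw [e1, e2, bd_apply, ← Finset.sum_filter]
    refine Finset.sum_bij (fun b _ => f.fa b) ?_ ?_ ?_ ?_
    · intro b hb
      simp only [Finset.mem_filter, Finset.mem_univ, true_and] at hb ⊢
      obtain ⟨l, hl⟩ := hf.2.2.1 (f.fa b)
      obtain ⟨l', rfl⟩ := arc_last hG hf b (hb.trans hv0.symm) (by simp [hv0]) hl
      exact ⟨⟨b, rfl⟩, (fiberList_last hl).symm.trans hb⟩
    · intro b hb c hc hbc
      simp only [Finset.mem_filter, Finset.mem_univ, true_and] at hb hc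
      obtain ⟨l, hl⟩ := hf.2.2.1 (f.fa b)
      obtain ⟨l', h1⟩ := arc_last hG hf b (hb.trans hv0.symm) (by simp [hv0]) hl
      rw [hbc] at hl
      obtain ⟨l'', h2⟩ := arc_last hG hf c (hc.trans hv0.symm) (by simp [hv0]) hl
      rw [h1] at h2
      simpa using (List.append_inj' h2 rfl).2
    · intro a ha
      simp only [Finset.mem_filter, Finset.mem_univ, true_and] at ha
      obtain ⟨⟨d, rfl⟩, ha2⟩ := ha
      obtain ⟨l, b, hl, hb⟩ := exists_last hf d
      refine ⟨b, ?_, hb⟩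
      simp only [Finset.mem_filter, Finset.mem_univ, true_and]
      exact (fiberList_last hl).trans ha2
    · intro b _; rfl
  · push Not at him
    obtain ⟨hw, a, ⟨l, hl, i, hi, hli⟩, _⟩ := hf.2.2.2.2 w him
    rw [Finset.sum_eq_zero (fun v _ => if_neg (him v))]
    have hsplit : l = l.take i ++ l[i] :: l[i+1] :: l.drop (i+2) := by
      rw [← List.drop_eq_getElem_cons hi, ← List.drop_eq_getElem_cons, List.take_append_drop]
    generalize hb : l[i] = b at hsplit
    generalize hb' : l[i+1] = b' at hsplit
    have hbw : H.t b = some w := by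
      rw [← hb]; exact hli
    rw [hsplit] at hl
    obtain ⟨h1, h2, h3, h4⟩ := consec_ne hf hl
    obtain ⟨h5, _⟩ := biv_consec hl.2.2
    rw [bd_apply]
    simp only [bivalent_arcs hw hbw (h5.symm.trans hbw) h4]
    rw [← Finset.sum_filter]
    have : Finset.univ.filter (fun x => x = b ∨ x = H.dag b') = {b, H.dag b'} := by
      ext x; simp
    rw [this, Finset.sum_pair h4, h1, h3, hφ]
    ring

end

end CGraph

namespace CGraph

theorem const_of_consec {α : Type} (ψ : α → ℚ) (l : List α)
    (h : ∀ l1 b b' l2, l = l1 ++ b :: b' :: l2 → ψ b = ψ b') :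
    ∀ x ∈ l, ∀ y ∈ l, ψ x = ψ y := by
  suffices hs : ∀ a m, l = a :: m → ∀ x ∈ l, ψ x = ψ a by
    intro x hx y hy
    rcases l with _ | ⟨a, m⟩
    · simp at hx
    · rw [hs a m rfl x hx, hs a m rfl y hy]
  induction l with
  | nil => intro a m hm; cases hm
  | cons c l ih =>
    intro a m hm x hx
    cases hm
    rcases List.mem_cons.1 hx with rfl | hx
    · rfl
    · rcases l with _ | ⟨d, l⟩
      · simp at hx
      · rw [ih (fun l1 b b' l2 h' => h (c :: l1) b b' l2 (by rw [h']; rfl)) d l rfl x hx]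
        exact (h [] c d l rfl).symm

theorem path_collapse {H K : CGraph} {g : PreMap H K} (hg : IsGraphMap g) (l : List H.A) :
    ∀ (s e : Option H.V), H.IsPath l s e → (∀ b ∈ l, b ∉ Set.range g.fa) →
    g.fv s = g.fv e ∧ ∀ b ∈ l, g.fv (H.t b) = g.fv e := by
  induction l with
  | nil => intro s e h _; cases h; simp
  | cons a l ih =>
    rintro s e ⟨h1, h2⟩ hoff
    obtain ⟨h3, h4⟩ := ih _ _ h2 (fun b hb => hoff b (by simp [hb]))
    refine ⟨?_, ?_⟩
    · rw [← h1, fv_off_range hg (hoff a (by simp)), h3]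
    · intro b hb
      rcases List.mem_cons.1 hb with rfl | hb
      · exact h3
      · exact h4 b hb

/-- A cycle is constant along each bivalent path. -/
theorem cycle_const {G H K : CGraph} {f : PreMap G H} {g : PreMap H K}
    (hf : IsGraphMap f) (u : K.V) {ψ : H.A → ℚ}
    (hψ : ψ ∈ H.Cyc (FiberArc g u)) {b c : H.A} (hbc : f.fa b = f.fa c) : ψ b = ψ c := by
  classical
  obtain ⟨h1, h2, h3⟩ := hψ
  obtain ⟨l, hl⟩ := hf.2.2.1 (f.fa b)
  refine const_of_consec ψ l ?_ b ((hl.1 b).2 rfl) c ((hl.1 c).2 hbc.symm)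
  rintro l1 x y l2 rfl
  obtain ⟨_, _, _, hne⟩ := consec_ne hf hl
  obtain ⟨k1, k2⟩ := biv_consec hl.2.2
  rcases k2 with k2 | ⟨w, k2, k3⟩
  · rw [h2 x, h2 y]
    · rintro ⟨_, _, _, v, hv, _⟩
      rw [← k1, k2] at hv; cases hv
    · rintro ⟨_, _, ⟨v, hv, _⟩, _⟩
      rw [k2] at hv; cases hv
  · have := congrFun h3 w
    rw [bd_apply] at this
    simp only [bivalent_arcs k3 k2 (k1.symm.trans k2) hne] at this
    rw [← Finset.sum_filter] at this
    have e : Finset.univ.filter (fun z => z = x ∨ z = H.dag y) = {x, H.dag y} := by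
      ext z; simp
    rw [e, Finset.sum_pair hne, h1] at this
    simp only [Pi.zero_apply] at this
    linarith

open Classical in
theorem bd_single (G : CGraph) (a : G.A) (c : ℚ) (v : G.V) :
    G.bd (Pi.single a c) v = if G.t a = some v then c else 0 := by
  rw [bd_apply, Finset.sum_eq_single a]
  · simp
  · intro b _ hb
    simp [hb]
  · simp

open Classical in
/-- Solving the boundary equation inside the fibers. -/
theorem solve_bd {G H : CGraph} {f : PreMap G H} (hf : IsGraphMap f) (Q : H.V → Prop)
    (h : G.V → ℚ)
    (h0 : ∀ v, (∀ w, Q w → f.fv (some v) ≠ some w) → h v = 0)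
    (hs : ∀ w, ∑ v, (if f.fv (some v) = some w then h v else 0) = 0) :
    ∃ η : G.A → ℚ, (∀ a, η (G.dag a) = - η a) ∧
      (∀ a, η a ≠ 0 → a ∉ Set.range f.fa ∧ ∃ w, Q w ∧ f.fv (G.t a) = some w) ∧
      G.bd η = h := by
  -- the space of admissible chains
  let T : Submodule ℚ (G.A → ℚ) :=
    { carrier := {η | (∀ a, η (G.dag a) = - η a) ∧
        ∀ a, ¬ (a ∉ Set.range f.fa ∧ ∃ w, Q w ∧ f.fv (G.t a) = some w) → η a = 0}
      zero_mem' := ⟨by simp, by simp⟩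
      add_mem' := by
        rintro φ ψ ⟨h1, h2⟩ ⟨k1, k2⟩
        refine ⟨fun a => ?_, fun a ha => ?_⟩
        · simp [h1, k1]; ring
        · simp [h2 a ha, k2 a ha]
      smul_mem' := by
        rintro c φ ⟨h1, h2⟩
        refine ⟨fun a => ?_, fun a ha => ?_⟩
        · simp [h1]
        · simp [h2 a ha] }
  let S : Submodule ℚ (G.V → ℚ) := T.map G.bd
  suffices hS : h ∈ S by
    obtain ⟨η, hη, hb⟩ := hS
    exact ⟨η, hη.1, fun a ha => by_contra fun hc => ha (hη.2 a hc), hb⟩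
  let δ : Option G.V → G.V → ℚ := fun x v => if x = some v then 1 else 0
  have harc : ∀ (w : H.V) (c : G.A), Q w → c ∉ Set.range f.fa → f.fv (G.t c) = some w →
      δ (G.t c) - δ (G.t (G.dag c)) ∈ S := by
    intro w c hw hc hcw
    refine ⟨Pi.single c 1 - Pi.single (G.dag c) 1, ⟨?_, ?_⟩, ?_⟩
    · intro a
      have e1 : G.dag a = c ↔ a = G.dag c :=
        ⟨fun h => by rw [← h, G.dag_dag], fun h => by rw [h, G.dag_dag]⟩
      have e2 : G.dag a = G.dag c ↔ a = c :=
        ⟨fun h => by rw [← G.dag_dag a, h, G.dag_dag], fun h => by rw [h]⟩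
      simp only [Pi.sub_apply, Pi.single_apply, e1, e2]
      ring
    · intro a ha
      have n1 : a ≠ c := by
        rintro rfl; exact ha ⟨hc, w, hw, hcw⟩
      have n2 : a ≠ G.dag c := by
        rintro rfl
        exact ha ⟨dag_off_range hf hc, w, hw, (fv_off_range hf hc).trans hcw⟩
      simp [n1, n2]
    · funext v
      rw [map_sub, Pi.sub_apply, bd_single, bd_single]
      rfl
  have hpath : ∀ (w : H.V) (l : List G.A) (s e : Option G.V), Q w → G.IsPath l s e →
      (∀ c ∈ l, c ∉ Set.range f.fa) → f.fv s = some w → δ e - δ s ∈ S := by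
    intro w l
    induction l with
    | nil =>
      intro s e _ hp _ _
      cases hp
      rw [sub_self]; exact S.zero_mem
    | cons c l ih =>
      rintro s e hw ⟨hp1, hp2⟩ hoff hs
      have hc := hoff c (by simp)
      have hcw : f.fv (G.t c) = some w := by
        rw [← fv_off_range hf hc, hp1, hs]
      have k1 := ih _ _ hw hp2 (fun c hc => hoff c (by simp [hc])) hcw
      have k2 := harc w c hw hc hcw
      rw [hp1] at k2
      have := S.add_mem k1 k2
      rwa [sub_add_sub_cancel] at this
  rcases isEmpty_or_nonempty G.V with hE | hN
  · have : h = 0 := funext fun v => hE.elim v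
    rw [this]; exact S.zero_mem
  · let ρ : Option H.V → G.V := Function.invFun (fun v => f.fv (some v))
    have hρ : ∀ v, f.fv (some (ρ (f.fv (some v)))) = f.fv (some v) := by
      intro v
      exact Function.invFun_eq (f := fun v => f.fv (some v)) ⟨v, rfl⟩
    have hdec : h = ∑ v, h v • (δ (some v) - δ (some (ρ (f.fv (some v))))) := by
      simp only [smul_sub, Finset.sum_sub_distrib]
      have z : ∑ v, h v • δ (some (ρ (f.fv (some v)))) = 0 := by
        rw [← Finset.sum_fiberwise Finset.univ (fun v => f.fv (some v))]
        refine Finset.sum_eq_zero fun y _ => ?_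
        have : ∑ v ∈ Finset.univ.filter (fun v => f.fv (some v) = y),
            h v • δ (some (ρ (f.fv (some v)))) =
            (∑ v ∈ Finset.univ.filter (fun v => f.fv (some v) = y), h v) • δ (some (ρ y)) := by
          rw [Finset.sum_smul]
          refine Finset.sum_congr rfl fun v hv => ?_
          rw [(Finset.mem_filter.1 hv).2]
        rw [this]
        have : ∑ v ∈ Finset.univ.filter (fun v => f.fv (some v) = y), h v = 0 := by
          cases y with
          | none =>
            refine Finset.sum_eq_zero fun v hv => h0 v fun w _ hw => ?_
            rw [(Finset.mem_filter.1 hv).2] at hw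
            cases hw
          | some w => rw [Finset.sum_filter]; exact hs w
        rw [this, zero_smul]
      rw [z, sub_zero]
      funext v
      simp [δ]
    rw [hdec]
    refine S.sum_mem fun v _ => ?_
    by_cases hv : ∃ w, Q w ∧ f.fv (some v) = some w
    · obtain ⟨w, hw, hvw⟩ := hv
      refine S.smul_mem _ ?_
      obtain ⟨l, hl1, hl2⟩ := hf.2.2.2.1 (ρ (f.fv (some v))) v (hρ v) (by rw [hρ, hvw]; simp)
      exact hpath w l _ _ hw hl2 hl1 (by rw [hρ, hvw])
    · push Not at hv
      rw [h0 v hv, zero_smul]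
      exact S.zero_mem

section
variable {G H K : CGraph} {f : PreMap G H} {g : PreMap H K}

theorem comp_fiberArc_iff (hf : IsGraphMap f) (hg : IsGraphMap g) (u : K.V) (a : G.A) :
    FiberArc (f.comp g) u a ↔
      a ∉ Set.range (f.fa ∘ g.fa) ∧ g.fv (f.fv (G.t a)) = some u ∧
        g.fv (f.fv (G.t (G.dag a))) = some u := by
  have key : ∀ x : Option G.V, g.fv (f.fv x) = some u →
      ∃ v, x = some v ∧ (f.comp g).fv (some v) = some u := by
    intro x hx
    cases x with
    | none => rw [hf.1, hg.1] at hx; cases hx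
    | some v => exact ⟨v, rfl, hx⟩
  constructor
  · rintro ⟨h1, _, ⟨v, h3, h4⟩, ⟨v', h5, h6⟩⟩
    exact ⟨h1, by rw [h3]; exact h4, by rw [h5]; exact h6⟩
  · rintro ⟨h1, h2, h3⟩
    refine ⟨h1, ?_, key _ h2, key _ h3⟩
    rintro ⟨c, hc⟩
    refine h1 ⟨K.dag c, ?_⟩
    simp only [PreMap.comp, Function.comp] at hc ⊢
    rw [hg.2.1, hf.2.1, hc, G.dag_dag]

/-- The pull-back of a cycle in the fiber of the composite. -/
theorem pull_mem (hG : G.Connected) (hf : IsGraphMap f) (hg : IsGraphMap g) (u : K.V)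
    {φ : G.A → ℚ} (hφ : φ ∈ G.Cyc (FiberArc (f.comp g) u)) :
    (fun b => φ (f.fa b)) ∈ H.Cyc (FiberArc g u) := by
  classical
  refine ⟨fun b => ?_, fun b hb => ?_, ?_⟩
  · simp only [hf.2.1, hφ.1]
  · by_contra hne
    apply hb
    have hF : FiberArc (f.comp g) u (f.fa b) := by_contra fun h => hne (hφ.2.1 _ h)
    rw [comp_fiberArc_iff hf hg] at hF
    rw [fiberArc_iff hg]
    obtain ⟨l, hl⟩ := hf.2.2.1 (f.fa b)
    have hoff : ∀ c ∈ l, c ∉ Set.range g.fa := by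
      rintro c hc ⟨d, rfl⟩
      exact hF.1 ⟨d, (hl.1 _).1 hc⟩
    have hbl := (hl.1 b).2 rfl
    have := (path_collapse hg l _ _ hl.2.2.1 hoff).2 b hbl
    exact ⟨hoff b hbl, this.trans hF.2.1⟩
  · funext w
    rw [bd_comp hG hf φ hφ.1]
    simp [hφ.2.2]

theorem pull_surj (hG : G.Connected) (hf : IsGraphMap f) (hg : IsGraphMap g) (u : K.V)
    {ψ : H.A → ℚ} (hψ : ψ ∈ H.Cyc (FiberArc g u)) :
    ∃ φ ∈ G.Cyc (FiberArc (f.comp g) u), (fun b => φ (f.fa b)) = ψ := by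
  classical
  let φ₀ : G.A → ℚ := fun a => if h : ∃ b, f.fa b = a then ψ h.choose else 0
  have h1 : ∀ b, φ₀ (f.fa b) = ψ b := by
    intro b
    have h : ∃ c, f.fa c = f.fa b := ⟨b, rfl⟩
    simp only [φ₀]
    rw [dif_pos h]
    exact cycle_const hf u hψ h.choose_spec
  have h1' : ∀ a, a ∉ Set.range f.fa → φ₀ a = 0 := fun a ha => dif_neg ha
  have hanti : ∀ a, φ₀ (G.dag a) = - φ₀ a := by
    intro a
    by_cases ha : a ∈ Set.range f.fa
    · obtain ⟨b, rfl⟩ := ha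
      rw [← hf.2.1, h1, h1, hψ.1]
    · rw [h1' a ha, h1' _ (dag_off_range hf ha), neg_zero]
  have hend : ∀ a, φ₀ a ≠ 0 → g.fv (f.fv (G.t a)) = some u := by
    intro a ha
    have hr : a ∈ Set.range f.fa := by_contra fun h => ha (h1' a h)
    obtain ⟨d, rfl⟩ := hr
    obtain ⟨l, b, hl, hb⟩ := exists_last hf d
    rw [← fiberList_last hl]
    rw [← hb, h1] at ha
    have : FiberArc g u b := by_contra fun h => ha (hψ.2.1 _ h)
    exact ((fiberArc_iff hg u b).1 this).2
  have hsupp : ∀ a, φ₀ a ≠ 0 → FiberArc (f.comp g) u a := by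
    intro a ha
    rw [comp_fiberArc_iff hf hg]
    refine ⟨?_, hend a ha, hend _ (by rw [hanti]; exact neg_ne_zero.2 ha)⟩
    rintro ⟨c, rfl⟩
    simp only [Function.comp] at ha
    rw [h1] at ha
    have : FiberArc g u (g.fa c) := by_contra fun h => ha (hψ.2.1 _ h)
    exact this.1 ⟨c, rfl⟩
  obtain ⟨η, k1, k2, k3⟩ := solve_bd hf (fun w => g.fv (some w) = some u) (G.bd φ₀) (by
    intro v hv
    rw [bd_apply]
    refine Finset.sum_eq_zero fun a _ => ?_
    split_ifs with hta
    · by_contra hne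
      have := hend a hne
      rw [hta] at this
      cases hfv : f.fv (some v) with
      | none => rw [hfv, hg.1] at this; cases this
      | some w => rw [hfv] at this; exact hv w this hfv
    · rfl) (by
    intro w
    rw [← bd_comp hG hf φ₀ hanti]
    simp only [h1]
    exact congrFun hψ.2.2 w)
  refine ⟨φ₀ - η, ⟨?_, ?_, ?_⟩, ?_⟩
  · intro a
    simp [hanti, k1]; ring
  · intro a ha
    have e1 : φ₀ a = 0 := by_contra fun h => ha (hsupp a h)
    have e2 : η a = 0 := by
      by_contra h
      obtain ⟨h4, w, hw, h5⟩ := k2 a h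
      apply ha
      rw [comp_fiberArc_iff hf hg, fv_off_range hf h4, h5]
      refine ⟨?_, hw, hw⟩
      rintro ⟨c, rfl⟩
      exact h4 ⟨_, rfl⟩
    simp [e1, e2]
  · rw [map_sub, k3, sub_self]
  · funext b
    have : η (f.fa b) = 0 := by
      by_contra h
      exact (k2 _ h).1 ⟨b, rfl⟩
    simp [this, h1]

/-- The pull-back map as a linear map. -/
noncomputable def pull (hG : G.Connected) (hf : IsGraphMap f) (hg : IsGraphMap g) (u : K.V) :
    G.Cyc (FiberArc (f.comp g) u) →ₗ[ℚ] H.Cyc (FiberArc g u) :=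
  LinearMap.codRestrict _ ((LinearMap.funLeft ℚ ℚ f.fa).comp (Submodule.subtype _))
    (fun φ => pull_mem hG hf hg u φ.2)

theorem fiberArc_comp (hf : IsGraphMap f) (hg : IsGraphMap g) {u : K.V} {w : H.V}
    (hw : g.fv (some w) = some u) {a : G.A} (ha : FiberArc f w a) :
    FiberArc (f.comp g) u a := by
  rw [fiberArc_iff hf] at ha
  rw [comp_fiberArc_iff hf hg, fv_off_range hf ha.1, ha.2]
  refine ⟨?_, hw, hw⟩
  rintro ⟨c, rfl⟩
  exact ha.1 ⟨_, rfl⟩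

theorem Cyc_mono {P P' : G.A → Prop} (h : ∀ a, P a → P' a) : G.Cyc P ≤ G.Cyc P' :=
  fun _ hφ => ⟨hφ.1, fun a ha => hφ.2.1 a fun h' => ha (h a h'), hφ.2.2⟩

open Classical in
theorem finrank_ker_pull (hG : G.Connected) (hf : IsGraphMap f) (hg : IsGraphMap g) (u : K.V) :
    Module.finrank ℚ (LinearMap.ker (pull hG hf hg u)) =
      ∑ w : {w : H.V // g.fv (some w) = some u},
        Module.finrank ℚ (G.Cyc (FiberArc f w.1)) := by
  rw [← Module.finrank_pi_fintype]
  let ι := {w : H.V // g.fv (some w) = some u}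
  -- the sum map
  let σ : (∀ w : ι, G.Cyc (FiberArc f w.1)) →ₗ[ℚ] (G.A → ℚ) :=
    ∑ w : ι, (Submodule.subtype _).comp (LinearMap.proj w)
  have hσ : ∀ x, σ x = ∑ w, (x w).1 := by
    intro x
    simp [σ, LinearMap.sum_apply]
  have hval : ∀ x (w : ι) a, f.fv (G.t a) = some w.1 → σ x a = (x w).1 a := by
    intro x w a ha
    rw [hσ, Finset.sum_apply, Finset.sum_eq_single w]
    · intro w' _ hne
      refine (x w').2.2.1 a fun h => hne ?_
      rw [fiberArc_iff hf, ha] at h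
      exact Subtype.ext (Option.some.inj h.2).symm
    · simp
  have hinj : Function.Injective σ := by
    intro x y hxy
    funext w
    apply Subtype.ext
    funext a
    by_cases ha : FiberArc f w.1 a
    · have ha' := ((fiberArc_iff hf _ _).1 ha).2
      rw [← hval x w a ha', ← hval y w a ha', hxy]
    · rw [(x w).2.2.1 a ha, (y w).2.2.1 a ha]
  have hr : LinearMap.range σ =
      (LinearMap.ker (pull hG hf hg u)).map (Submodule.subtype _) := by
    ext φ
    constructor
    · rintro ⟨x, rfl⟩
      have hm : σ x ∈ G.Cyc (FiberArc (f.comp g) u) := by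
        rw [hσ]
        exact Submodule.sum_mem _ fun w _ =>
          Cyc_mono (fun a => fiberArc_comp hf hg w.2) (x w).2
      refine ⟨⟨σ x, hm⟩, ?_, rfl⟩
      apply Subtype.ext
      funext b
      change σ x (f.fa b) = 0
      rw [hσ, Finset.sum_apply]
      exact Finset.sum_eq_zero fun w _ => (x w).2.2.1 _ fun h => h.1 ⟨b, rfl⟩
    · rintro ⟨⟨φ, hφ⟩, hk, rfl⟩
      have h0 : ∀ b, φ (f.fa b) = 0 := fun b => congrFun (congrArg Subtype.val hk) b
      let ξ : ι → G.A → ℚ := fun w a => if f.fv (G.t a) = some w.1 then φ a else 0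
      have hξ : ∀ w, ξ w ∈ G.Cyc (FiberArc f w.1) := by
        intro w
        refine ⟨fun a => ?_, fun a ha => ?_, ?_⟩
        · by_cases hr : a ∈ Set.range f.fa
          · obtain ⟨b, rfl⟩ := hr
            simp [ξ, hφ.1, h0]
          · simp only [ξ, fv_off_range hf hr, hφ.1]
            split_ifs <;> simp
        · simp only [ξ]
          split_ifs with h
          · by_contra hne
            refine ha ((fiberArc_iff hf _ _).2 ⟨?_, h⟩)
            rintro ⟨b, rfl⟩
            exact hne (h0 b)
          · rfl
        · funext v
          have hv0 := congrFun hφ.2.2 v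
          rw [bd_apply] at hv0 ⊢
          by_cases hv : f.fv (some v) = some w.1
          · rw [← hv0]
            refine Finset.sum_congr rfl fun a _ => ?_
            split_ifs with h
            · simp [ξ, h, hv]
            · rfl
          · refine Finset.sum_eq_zero fun a _ => ?_
            split_ifs with h
            · simp [ξ, h, hv]
            · rfl
      refine ⟨fun w => ⟨ξ w, hξ w⟩, ?_⟩
      funext a
      by_cases ha : φ a = 0
      · rw [hσ, Finset.sum_apply]
        simp [ξ, ha]
      · have hF : FiberArc (f.comp g) u a := by_contra fun h => ha (hφ.2.1 _ h)
        have := ((comp_fiberArc_iff hf hg u a).1 hF).2.1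
        cases hfv : f.fv (G.t a) with
        | none => rw [hfv, hg.1] at this; cases this
        | some w =>
          rw [hfv] at this
          rw [hval _ ⟨w, this⟩ a hfv]
          simp [ξ, hfv]
  rw [← LinearMap.finrank_range_of_inj hinj, hr]
  exact (LinearEquiv.finrank_eq (Submodule.equivMapOfInjective _
    (Submodule.subtype_injective _) _))

open Classical in
theorem b1_comp (hG : G.Connected) (hf : IsGraphMap f) (hg : IsGraphMap g) (u : K.V) :
    b1 (fiber (f.comp g) u) = b1 (fiber g u) +
      ∑ w : {w : H.V // g.fv (some w) = some u}, b1 (fiber f w.1) := by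
  simp only [b1_fiber_eq]
  rw [← finrank_ker_pull hG hf hg u,
    ← LinearMap.finrank_range_add_finrank_ker (pull hG hf hg u)]
  congr 1
  rw [LinearMap.range_eq_top.2, finrank_top]
  rintro ⟨ψ, hψ⟩
  obtain ⟨φ, hφ, h⟩ := pull_surj hG hf hg u hψ
  exact ⟨⟨φ, hφ⟩, Subtype.ext h⟩

end

end CGraph

open CGraph in
open Classical in
theorem b1_fiber_comp_and_gr_functor :
    (∀ (G H K : CGraph), G.Connected → H.Connected → K.Connected →
      ∀ (f : PreMap G H) (g : PreMap H K), IsGraphMap f → IsGraphMap g →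
        ∀ u : K.V, b1 (fiber (f.comp g) u) =
          b1 (fiber g u) +
            ∑ w : H.V, (if g.fv (some w) = some u then b1 (fiber f w) else 0)) ∧
    (∀ G : CGraph, G.Connected → grMap (PreMap.id G) = id) ∧
    (∀ (G H K : CGraph), G.Connected → H.Connected → K.Connected →
      ∀ (f : PreMap G H) (g : PreMap H K), IsGraphMap f → IsGraphMap g →
        grMap (f.comp g) = grMap g ∘ grMap f) := by
  refine ⟨?_, ?_, ?_⟩
  · intro G H K hG _ _ f g hf hg u
    rw [b1_comp hG hf hg u, ← Finset.sum_filter]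
    congr 1
    symm
    refine Finset.sum_subtype _ (fun w => ?_) _
    simp
  · intro G _
    funext α w
    have hb : b1 (fiber (PreMap.id G) w) = 0 := by
      rw [b1_fiber_eq]
      have : G.Cyc (FiberArc (PreMap.id G) w) = ⊥ := by
        rw [eq_bot_iff]
        intro φ hφ
        rw [Submodule.mem_bot]
        funext a
        exact hφ.2.1 a fun h => h.1 ⟨a, rfl⟩
      rw [this, finrank_bot]
    unfold grMap
    rw [hb, zero_add]
    have hu : ∀ v : {v : G.V // (PreMap.id G).fv (some v) = some w}, v.1 = w :=
      fun v => Option.some.inj v.2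
    rw [Finset.sum_eq_single ⟨w, rfl⟩]
    · rfl
    · intro v _ hv
      exact absurd (Subtype.ext (hu v)) hv
    · simp
  · intro G H K hG _ _ f g hf hg
    funext α u
    simp only [grMap, Function.comp]
    rw [b1_comp hG hf hg u, Finset.sum_add_distrib, add_assoc]
    congr 2
    have e : ∀ (X Y : CGraph) (h : PreMap X Y) (w : Y.V) (β : X.V → ℕ),
        ∑ v : {v : X.V // h.fv (some v) = some w}, β v.1 =
          ∑ v, if h.fv (some v) = some w then β v else 0 := by
      intro X Y h w β
      rw [← Finset.sum_filter]
      exact (Finset.sum_subtype _ (by simp) _).symm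
    simp only [e]
    rw [e H K g u (fun w => ∑ v, if f.fv (some v) = some w then α v else 0)]
    have e2 : ∀ w, (if g.fv (some w) = some u then
        ∑ v, (if f.fv (some v) = some w then α v else 0) else 0) =
        ∑ v, if g.fv (some w) = some u then (if f.fv (some v) = some w then α v else 0)
          else 0 := by
      intro w
      split_ifs <;> simp
    simp only [e2]
    rw [Finset.sum_comm]
    refine Finset.sum_congr rfl fun v _ => ?_
    simp only [PreMap.comp, Function.comp]
    rcases Option.eq_none_or_eq_some (f.fv (some v)) with hv | ⟨w1, hv⟩
    · simp [hv, hg.1]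
    · simp only [hv]
      rw [Finset.sum_eq_single w1]
      · simp
      · intro w _ hw
        have : some w1 ≠ some w := fun h => hw (Option.some.inj h).symm
        simp [this]
      · simp
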